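/- Let S and T be monoids. If the direct product S × T is right coherent, then both S and T are right coherent. -/

import Mathlib

def IsRightCongruence {M : Type*} [Monoid M] (r : M → M → Prop) : Prop :=
  Equivalence r ∧ ∀ a b c : M, r a b → r (a * c) (b * c)

def RCongGenBy {M : Type*} [Monoid M] (H : Set (M × M)) (r : M → M → Prop) : Prop :=
  IsRightCongruence r ∧ (∀ p ∈ H, r p.1 p.2) ∧
    ∀ r' : M → M → Prop, IsRightCongruence r' → (∀ p ∈ H, r' p.1 p.2) →
      ∀ x y : M, r x y → r' x y

def FGRightCongruence {M : Type*} [Monoid M] (r : M → M → Prop) : Prop :=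
  ∃ H : Set (M × M), H.Finite ∧ RCongGenBy H r

def RightCoherent (M : Type*) [Monoid M] : Prop :=
  ∀ r : M → M → Prop, FGRightCongruence r → ∀ a b : M,
    (∃ C : Finset M,
      {x : M | (∃ s : M, r x (a * s)) ∧ (∃ t : M, r x (b * t))} =
        ⋃ c ∈ C, {x : M | ∃ s : M, r x (c * s)}) ∧
    FGRightCongruence (fun u v : M => r (a * u) (a * v))

/- If `f : P → S` is a retraction with section `g`, and `ρ` is the right congruence on `S` generated
by `H`, let `σ` be the right congruence on `P` generated by `g(H)`. Then `g` maps `ρ` into `σ` and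
`f` maps `σ` into `ρ`, so the `f`-images of finite data witnessing coherence of `P` for `σ`, `g a`,
`g b` witness coherence of `S` for `ρ`, `a`, `b`. Each factor is a retract of a direct product. -/

section RightCongruence

variable {M N : Type*} [Monoid M] [Monoid N] {r : M → M → Prop} {q : N → N → Prop}

theorem IsRightCongruence.comap (hq : IsRightCongruence q) (f : M →ₙ* N) :
    IsRightCongruence (fun x y => q (f x) (f y)) := by
  refine ⟨hq.1.comap f, fun a b c hab => ?_⟩
  simpa only [map_mul] using hq.2 _ _ (f c) hab

theorem IsRightCongruence.comap_mul_left (hr : IsRightCongruence r) (a : M) :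
    IsRightCongruence (fun u v => r (a * u) (a * v)) := by
  refine ⟨hr.1.comap (a * ·), fun u v c huv => ?_⟩
  simpa only [mul_assoc] using hr.2 _ _ c huv

theorem RCongGenBy.rel_map {H : Set (M × M)} (hr : RCongGenBy H r) (hq : IsRightCongruence q)
    (f : M →ₙ* N) (hH : ∀ p ∈ H, q (f p.1) (f p.2)) (x y : M) (hxy : r x y) : q (f x) (f y) :=
  hr.2.2 _ (hq.comap f) hH x y hxy

/-- The right congruence generated by `H`, as the intersection of all right congruences
containing `H`. It serves to extend a right congruence on a retract to the whole monoid. -/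
def rightCongruenceGen (H : Set (M × M)) (x y : M) : Prop :=
  ∀ r : M → M → Prop, IsRightCongruence r → (∀ p ∈ H, r p.1 p.2) → r x y

theorem rCongGenBy_rightCongruenceGen (H : Set (M × M)) :
    RCongGenBy H (rightCongruenceGen H) where
  left :=
    { left :=
        { refl := fun x _ hr _ => hr.1.refl x
          symm := fun hxy r hr hH => hr.1.symm (hxy r hr hH)
          trans := fun hxy hyz r hr hH => hr.1.trans (hxy r hr hH) (hyz r hr hH) }
      right := fun _ _ c hab r hr hH => hr.2 _ _ c (hab r hr hH) }
  right := ⟨fun p hp _ _ hH => hH p hp, fun r hr hH _ _ hxy => hxy r hr hH⟩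

/-- The preimage in `M` of the principal subact `(aρ)M` of the right act `M/ρ`, where `ρ` is the
relation `r`. Working with preimages avoids forming the quotient act. -/
def saturatedOrbit (r : M → M → Prop) (a : M) : Set M :=
  {x | ∃ s, r x (a * s)}

theorem mem_saturatedOrbit_self (hr : IsRightCongruence r) (a : M) : a ∈ saturatedOrbit r a :=
  ⟨1, by simpa only [mul_one] using hr.1.refl a⟩

theorem saturatedOrbit_subset_of_mem (hr : IsRightCongruence r) {a b : M}
    (hb : b ∈ saturatedOrbit r a) : saturatedOrbit r b ⊆ saturatedOrbit r a := by
  obtain ⟨t, hbt⟩ := hb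
  rintro x ⟨s, hxs⟩
  have hbs : r (b * s) (a * (t * s)) := by simpa only [mul_assoc] using hr.2 _ _ s hbt
  exact ⟨t * s, hr.1.trans hxs hbs⟩

theorem map_mem_saturatedOrbit (f : M →ₙ* N) (hf : ∀ x y, r x y → q (f x) (f y)) {a x : M}
    (hx : x ∈ saturatedOrbit r a) : f x ∈ saturatedOrbit q (f a) := by
  obtain ⟨s, hxs⟩ := hx
  exact ⟨f s, by simpa only [map_mul] using hf _ _ hxs⟩

end RightCongruence

section Retract

open Function

variable {P S : Type*} [Monoid P] [Monoid S] {q : P → P → Prop} {r : S → S → Prop} {f : P →ₙ* S}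

theorem FGRightCongruence.of_leftInverse {g : S → P} (hq : FGRightCongruence q)
    (hr : IsRightCongruence r) (hfg : LeftInverse f g) (hf : ∀ x y, q x y → r (f x) (f y))
    (hg : ∀ x y, r x y → q (g x) (g y)) : FGRightCongruence r := by
  obtain ⟨K, hK, hqK⟩ := hq
  refine ⟨Prod.map f f '' K, hK.image _, hr, ?_, fun r' hr' hKr' x y hxy => ?_⟩
  · rintro _ ⟨p, hp, rfl⟩
    exact hf _ _ (hqK.2.1 p hp)
  · have hfgxy : r' (f (g x)) (f (g y)) :=
      hqK.rel_map hr' f (fun p hp => hKr' _ ⟨p, hp, rfl⟩) _ _ (hg x y hxy)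
    simpa only [hfg x, hfg y] using hfgxy

theorem saturatedOrbit_inter_eq_biUnion_of_leftInverse {g : S →ₙ* P} (hq : IsRightCongruence q)
    (hr : IsRightCongruence r) (hfg : LeftInverse f g) (hf : ∀ x y, q x y → r (f x) (f y))
    (hg : ∀ x y, r x y → q (g x) (g y)) {a b : S} {C : Set P}
    (hC : saturatedOrbit q (g a) ∩ saturatedOrbit q (g b) = ⋃ c ∈ C, saturatedOrbit q c) :
    saturatedOrbit r a ∩ saturatedOrbit r b = ⋃ c ∈ C, saturatedOrbit r (f c) := by
  have map_mem {d : S} {p : P} (hp : p ∈ saturatedOrbit q (g d)) : f p ∈ saturatedOrbit r d :=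
    hfg d ▸ map_mem_saturatedOrbit f hf hp
  apply Set.Subset.antisymm
  · rintro x ⟨hxa, hxb⟩
    have hgx : g x ∈ ⋃ c ∈ C, saturatedOrbit q c :=
      hC ▸ ⟨map_mem_saturatedOrbit g hg hxa, map_mem_saturatedOrbit g hg hxb⟩
    obtain ⟨c, hc, hgxc⟩ := Set.mem_iUnion₂.mp hgx
    exact Set.mem_iUnion₂.mpr ⟨c, hc, hfg x ▸ map_mem_saturatedOrbit f hf hgxc⟩
  · refine Set.iUnion₂_subset fun c hc => ?_
    have hc_inter : c ∈ saturatedOrbit q (g a) ∩ saturatedOrbit q (g b) :=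
      hC ▸ Set.mem_biUnion hc (mem_saturatedOrbit_self hq c)
    exact Set.subset_inter (saturatedOrbit_subset_of_mem hr (map_mem hc_inter.1))
      (saturatedOrbit_subset_of_mem hr (map_mem hc_inter.2))

theorem RightCoherent.of_leftInverse {g : S →ₙ* P} (hP : RightCoherent P)
    (hfg : LeftInverse f g) : RightCoherent S := by
  classical
  rintro r ⟨H, hH, hrH⟩ a b
  let q := rightCongruenceGen (Prod.map g g '' H)
  have hqH : RCongGenBy (Prod.map g g '' H) q := rCongGenBy_rightCongruenceGen _
  have hg : ∀ x y, r x y → q (g x) (g y) :=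
    hrH.rel_map hqH.1 g fun p hp => hqH.2.1 _ ⟨p, hp, rfl⟩
  have hf : ∀ x y, q x y → r (f x) (f y) := by
    refine hqH.rel_map hrH.1 f ?_
    rintro _ ⟨p, hp, rfl⟩
    simpa only [Prod.map_fst, Prod.map_snd, hfg p.1, hfg p.2] using hrH.2.1 p hp
  obtain ⟨⟨C, hC⟩, hann⟩ := hP q ⟨_, hH.image _, hqH⟩ (g a) (g b)
  refine ⟨⟨C.image f, ?_⟩, ?_⟩
  · rw [Finset.set_biUnion_finset_image]
    exact saturatedOrbit_inter_eq_biUnion_of_leftInverse hqH.1 hrH.1 hfg hf hg hC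
  · refine hann.of_leftInverse (hrH.1.comap_mul_left a) hfg (fun u v huv => ?_) fun u v huv => ?_
    · simpa only [map_mul, hfg a] using hf _ _ huv
    · simpa only [map_mul] using hg _ _ huv

end Retract

theorem stmt16 {S T : Type*} [Monoid S] [Monoid T]
    (h : RightCoherent (S × T)) :
    RightCoherent S ∧ RightCoherent T :=
  ⟨h.of_leftInverse (f := MulHom.fst S T) (g := MonoidHom.inl S T) fun _ => rfl,
    h.of_leftInverse (f := MulHom.snd S T) (g := MonoidHom.inr S T) fun _ => rfl⟩
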